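/- Let ε ≤ 1/20, let n be a positive integer divisible by 16, and let W be a candidate routing matrix for parameters ε and n. If π₁, …, π_n are independent, uniformly random permutations of {1,…,n}, then the probability that the schedule induced by W on the instance I(π₁,…,π_n) is collision-free is at most (15/16)^{n²/128}. -/

import Mathlib

/-!
Only the critical edges matter, and of their crossings only the free ones: those in `[n, 2n)`
which the packet does not delay by waiting in front of the edge.

Both the parking times and the arrival times are distinct, so the packets wait for at most `n² / 20`
time units in total on their way. Hence, whatever the permutations are, there are at least
`2 n² / 5` free crossings, and by Cauchy–Schwarz order `n³` pairs of them are simultaneous.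

Expose the packets one after the other. If packet `i` waits for time `w e` in front of the critical
edge `e`, then `w ∘ π_i` determines its timetable, and given `w ∘ π_i` the edges which it crosses
freely are still in uniformly random order. The conditional probability that it avoids the edges
occupied by earlier packets is therefore at most `exp (-gain / n)`, where `gain` is essentially the
number of edges occupied by earlier packets at the times of its free crossings. In other words, the
weight `exp (gain / n)` on the event of avoidance, and `0` elsewhere, has conditional mean at most
`1`, and so the product of these weights over all packets has mean at most `1`. In a collision-free
outcome the gains add up to at least `n³ / 400`, so by Markov's inequality such an outcome has
probability at most `exp (-n² / 400)`.
-/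

/-- A routing instance: a finite directed multigraph together with packets
`0,…,k-1`, where packet `i` is given a list of edges `path i`. -/
structure RInst where
  V : Type
  E : Type
  [fintE : Fintype E]
  src : E → V
  dst : E → V
  k : ℕ
  path : Fin k → List E

attribute [instance] RInst.fintE

namespace RInst

/-- The paths are directed paths (consecutive edges fit head-to-tail) and
use no edge more than once. -/
def Valid (I : RInst) : Prop :=
  (∀ i, List.Chain' (fun e f => I.dst e = I.src f) (I.path i)) ∧
  (∀ i, (I.path i).Nodup)

/-- `σ i t` is the number of edges of `path i` traversed by time `t`. -/
def IsSchedule (I : RInst) (σ : Fin I.k → ℕ → ℕ) : Prop :=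
  (∀ i, σ i 0 = 0) ∧
  (∀ i t, σ i (t + 1) = σ i t ∨ σ i (t + 1) = σ i t + 1) ∧
  (∀ i t, σ i t ≤ (I.path i).length)

/-- Packet `i` crosses edge `e` in time step `t+1`. -/
def Crosses (I : RInst) (σ : Fin I.k → ℕ → ℕ) (i : Fin I.k) (e : I.E) (t : ℕ) : Prop :=
  σ i (t + 1) = σ i t + 1 ∧ (I.path i)[σ i t]? = some e

/-- The load of the schedule is at most `c`: in every time step every edge
is crossed by at most `c` packets. -/
def LoadLE (I : RInst) (σ : Fin I.k → ℕ → ℕ) (c : ℕ) : Prop :=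
  ∀ (e : I.E) (t : ℕ), Nat.card {i : Fin I.k | I.Crosses σ i e t} ≤ c

/-- All packets have arrived by time `T` (i.e. the makespan is at most `T`). -/
def CompletedBy (I : RInst) (σ : Fin I.k → ℕ → ℕ) (T : ℕ) : Prop :=
  ∀ i, σ i T = (I.path i).length

/-- The congestion: the maximum number of paths using a common edge. -/
noncomputable def congestion (I : RInst) : ℕ :=
  Finset.univ.sup fun e : I.E => Nat.card {i : Fin I.k | e ∈ I.path i}

/-- The dilation: the maximum length of a path. -/
noncomputable def dilation (I : RInst) : ℕ :=
  Finset.univ.sup fun i : Fin I.k => (I.path i).length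

end RInst

/-! ### The lower-bound instance `I(π₁,…,π_n)` on the graph `G_n` -/

/-- Vertices of `G_n`: `s`, `s'`, `u_1,…,u_{n+1}`, `v_1,…,v_n`, `t`.
(`Fin (n+1)` indexes `u_1,…,u_{n+1}`, `Fin n` indexes `v_1,…,v_n`.) -/
def Vtx (n : ℕ) : Type := Unit ⊕ Unit ⊕ Fin (n + 1) ⊕ Fin n ⊕ Unit

def Vtx.s {n : ℕ} : Vtx n := Sum.inl ()
def Vtx.s' {n : ℕ} : Vtx n := Sum.inr (Sum.inl ())
def Vtx.u {n : ℕ} (j : Fin (n + 1)) : Vtx n := Sum.inr (Sum.inr (Sum.inl j))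
def Vtx.v {n : ℕ} (j : Fin n) : Vtx n := Sum.inr (Sum.inr (Sum.inr (Sum.inl j)))
def Vtx.t {n : ℕ} : Vtx n := Sum.inr (Sum.inr (Sum.inr (Sum.inr ())))

/-- Edges of `G_n`: `(s,s')`, the edges `(s',u_j)` for `1 ≤ j ≤ n`, the critical
edges `e_j = (u_j,v_j)` for `1 ≤ j ≤ n`, the back edges `(v_j,u_{j'})` for
`j' ≠ j`, and `(u_{n+1},t)`. -/
def Edg (n : ℕ) : Type :=
  Unit ⊕ Fin n ⊕ Fin n ⊕ { p : Fin n × Fin (n + 1) // (p.1 : ℕ) ≠ (p.2 : ℕ) } ⊕ Unit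

instance (n : ℕ) : Fintype (Edg n) := by unfold Edg; infer_instance
instance (n : ℕ) : DecidableEq (Edg n) := by unfold Edg; infer_instance

def Edg.start {n : ℕ} : Edg n := Sum.inl ()
def Edg.toU {n : ℕ} (j : Fin n) : Edg n := Sum.inr (Sum.inl j)
def Edg.crit {n : ℕ} (j : Fin n) : Edg n := Sum.inr (Sum.inr (Sum.inl j))
def Edg.back {n : ℕ} (j : Fin n) (j' : Fin (n + 1)) (h : (j : ℕ) ≠ (j' : ℕ)) : Edg n :=
  Sum.inr (Sum.inr (Sum.inr (Sum.inl ⟨(j, j'), h⟩)))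
def Edg.toT {n : ℕ} : Edg n := Sum.inr (Sum.inr (Sum.inr (Sum.inr ())))

def Edg.src {n : ℕ} : Edg n → Vtx n
  | Sum.inl _ => Vtx.s
  | Sum.inr (Sum.inl _) => Vtx.s'
  | Sum.inr (Sum.inr (Sum.inl j)) => Vtx.u j.castSucc
  | Sum.inr (Sum.inr (Sum.inr (Sum.inl p))) => Vtx.v p.1.1
  | Sum.inr (Sum.inr (Sum.inr (Sum.inr _))) => Vtx.u (Fin.last n)

def Edg.dst {n : ℕ} : Edg n → Vtx n
  | Sum.inl _ => Vtx.s'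
  | Sum.inr (Sum.inl j) => Vtx.u j.castSucc
  | Sum.inr (Sum.inr (Sum.inl j)) => Vtx.v j
  | Sum.inr (Sum.inr (Sum.inr (Sum.inl p))) => Vtx.u p.1.2
  | Sum.inr (Sum.inr (Sum.inr (Sum.inr _))) => Vtx.t

/-- The `u`-vertex visited after crossing the `(i+1)`-st critical edge on the
path of `π`: it is `u_{π(i+2)}` (0-based: `(π (i+1)).castSucc`), except after the
last critical edge, where it is `u_{n+1}` (0-based: `Fin.last n`). -/
def nxt {n : ℕ} (π : Equiv.Perm (Fin n)) (i : Fin n) : Fin (n + 1) :=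
  if h : (i : ℕ) + 1 < n then (π ⟨(i : ℕ) + 1, h⟩).castSucc else Fin.last n

theorem nxt_ne {n : ℕ} (π : Equiv.Perm (Fin n)) (i : Fin n) :
    ((π i : ℕ)) ≠ ((nxt π i : ℕ)) := by
  by_cases h : (i : ℕ) + 1 < n
  · simp only [nxt, dif_pos h, Fin.coe_castSucc]
    intro he
    have h2 : π i = π ⟨(i : ℕ) + 1, h⟩ := Fin.val_injective he
    have h4 : (i : ℕ) = (i : ℕ) + 1 := congrArg Fin.val (π.injective h2)
    omega
  · simp only [nxt, dif_neg h, Fin.val_last]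
    exact Nat.ne_of_lt (π i).isLt

/-- The path `P(π) = s, s', u_{π(1)}, v_{π(1)}, u_{π(2)}, v_{π(2)}, …, u_{π(n)},
v_{π(n)}, u_{n+1}, t` as a list of `2n+3` edges (for `n ≥ 1`). -/
def pathOf {n : ℕ} (π : Equiv.Perm (Fin n)) : List (Edg n) :=
  if h : 0 < n then
    Edg.start :: Edg.toU (π ⟨0, h⟩) ::
      ((List.ofFn fun i : Fin n =>
          [Edg.crit (π i), Edg.back (π i) (nxt π i) (nxt_ne π i)]).flatten ++ [Edg.toT])
  else []

/-- The routing instance `I(π₁,…,π_n)`: the `n` packets with paths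
`P(π₁),…,P(π_n)` through `G_n`. -/
def lowerBoundInstance (n : ℕ) (πs : Fin n → Equiv.Perm (Fin n)) : RInst where
  V := Vtx n
  E := Edg n
  src := Edg.src
  dst := Edg.dst
  k := n
  path i := pathOf (πs i)

/-- The arrival time `F_i = W_{i,0} + (2n+3) + Σ_{j=1}^{n+1} W_{i,j}` of packet `i`
under the routing matrix `W` (columns indexed by `Fin (n+2)`, column `0` being the
parking time at the source). -/
def arrivalTime {n : ℕ} (W : Fin n → Fin (n + 2) → ℕ) (i : Fin n) : ℕ :=
  W i 0 + (2 * n + 3) + ∑ j ∈ Finset.univ.filter (fun j : Fin (n + 2) => j ≠ 0), W i j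

/-- A candidate routing matrix for parameters `ε` and `n`: the parking times
`W_{i,0}` are pairwise distinct, the arrival times `F_i` are pairwise distinct,
and `F_i ≤ (3+ε)·n` for every `i`. -/
def IsCandidate (ε : ℝ) (n : ℕ) (W : Fin n → Fin (n + 2) → ℕ) : Prop :=
  Function.Injective (fun i => W i 0) ∧
  Function.Injective (arrivalTime W) ∧
  ∀ i, (arrivalTime W i : ℝ) ≤ (3 + ε) * n

/-- The time step in which packet `i` crosses the edge at (0-based) position `p` of
its path `P(π_i)` under the schedule induced by the routing matrix `W`: packet `i`
waits `W_{i,0}` time units at `s`, then crosses one edge per time unit except that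
it additionally waits `W_{i,j}` time units upon reaching node `u_j` (the wait at
`u_{π_i(j)}` is incurred before the edges at positions `≥ 2j`, and the wait at
`u_{n+1}` before the final edge, at position `2n+2`). -/
def crossTime {n : ℕ} (W : Fin n → Fin (n + 2) → ℕ) (π : Equiv.Perm (Fin n))
    (i : Fin n) (p : ℕ) : ℕ :=
  W i 0 + (p + 1)
    + ∑ j : Fin n, (if 2 * ((j : ℕ) + 1) ≤ p then
        W i ⟨(π j : ℕ) + 1, by have := (π j).isLt; omega⟩ else 0)
    + (if 2 * n + 2 ≤ p then W i ⟨n + 1, by omega⟩ else 0)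

/-- The schedule induced by `W` on `I(π₁,…,π_n)` is collision-free: no two packets
cross the same edge in the same time step. -/
def CollisionFree {n : ℕ} (W : Fin n → Fin (n + 2) → ℕ)
    (πs : Fin n → Equiv.Perm (Fin n)) : Prop :=
  ∀ i i' : Fin n, i ≠ i' → ∀ p p' : ℕ, ∀ e : Edg n,
    (pathOf (πs i))[p]? = some e → (pathOf (πs i'))[p']? = some e →
    crossTime W (πs i) i p ≠ crossTime W (πs i') i' p'

section

open Finset

/-! ### Random permutations and tuples -/

section Swap

variable {α : Type*} [DecidableEq α] {C : Finset (Equiv.Perm α)}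

theorem card_mul_le_card_mul_card_filter_of_swap_mem {T B : Finset α} {p : α} {m : ℝ}
    (hswap : ∀ π ∈ C, ∀ x ∈ T, π * Equiv.swap p x ∈ C)
    (hm : ∀ π ∈ C, m ≤ #{x ∈ T | π x ∈ B}) :
    #C * m ≤ #T * #{π ∈ C | π p ∈ B} := by
  have hle : ∀ x ∈ T, #{π ∈ C | π x ∈ B} ≤ #{π ∈ C | π p ∈ B} := fun x hx =>
    card_le_card_of_injOn (· * Equiv.swap p x)
      (fun π hπ => by
        have := mem_filter.1 hπ
        simpa [this.2] using hswap π this.1 x hx)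
      (mul_left_injective _).injOn
  have := card_nsmul_le_card_nsmul (fun (π : Equiv.Perm α) x => π x ∈ B) hm
    fun x hx => Nat.cast_le (α := ℝ).2 (hle x hx)
  simpa using this

theorem card_filter_notMem_le_of_swap_mem [Fintype α] {T B : Finset α} {p : α} {m : ℝ}
    (hswap : ∀ π ∈ C, ∀ x ∈ T, π * Equiv.swap p x ∈ C)
    (hm : ∀ π ∈ C, m ≤ #{x ∈ T | π x ∈ B}) :
    #{π ∈ C | π p ∉ B} ≤ #C * Real.exp (-(m / Fintype.card α)) := by
  have hcard : (0 : ℝ) < Fintype.card α := Nat.cast_pos.2 (Fintype.card_pos_iff.2 ⟨p⟩)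
  have hhit : #C * (m / Fintype.card α) ≤ #{π ∈ C | π p ∈ B} := by
    rw [← mul_div_assoc, div_le_iff₀' hcard]
    refine (card_mul_le_card_mul_card_filter_of_swap_mem hswap hm).trans ?_
    gcongr
    exact Nat.cast_le.2 (card_le_univ _)
  have hsplit : (#{π ∈ C | π p ∈ B} + #{π ∈ C | π p ∉ B} : ℝ) = #C :=
    mod_cast card_filter_add_card_filter_not (s := C) fun π => π p ∈ B
  calc (#{π ∈ C | π p ∉ B} : ℝ) ≤ #C * (1 - m / Fintype.card α) := by linarith
    _ ≤ #C * Real.exp (-(m / Fintype.card α)) := by gcongr; exact Real.one_sub_le_exp_neg _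

/-- The positions of `S` are exposed one by one. Once `l` of them are exposed, the next one avoids
its set with conditional probability at most `exp (-(m p - l) / card α)`, and the `l` sum to at most
`#S ^ 2 / 2`. -/
theorem card_filter_forall_notMem_le [Fintype α] {P S : Finset α} {A : α → Finset α} {m : α → ℝ}
    (hswap : ∀ π ∈ C, ∀ p ∈ P, ∀ p' ∈ P, π * Equiv.swap p p' ∈ C)
    (hm : ∀ π ∈ C, ∀ p ∈ S, m p ≤ #{x ∈ P | π x ∈ A p}) (hS : S ⊆ P) :
    (#{π ∈ C | ∀ p ∈ S, π p ∉ A p} : ℝ) ≤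
      #C * Real.exp (-((∑ p ∈ S, m p - (#S : ℝ) ^ 2 / 2) / Fintype.card α)) := by
  induction S using Finset.induction_on with
  | empty => simp
  | insert p S hpS ih =>
    obtain ⟨hp, hSP⟩ := insert_subset_iff.1 hS
    set G := {π ∈ C | ∀ x ∈ S, π x ∉ A x} with hG
    have hGswap : ∀ π ∈ G, ∀ x ∈ P \ S, π * Equiv.swap p x ∈ G := by
      intro π hπ x hx
      rw [mem_sdiff] at hx
      rw [hG, mem_filter] at hπ ⊢
      refine ⟨hswap π hπ.1 p hp x hx.1, fun y hy => ?_⟩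
      rw [Equiv.Perm.mul_apply, Equiv.swap_apply_of_ne_of_ne (by grind) (by grind)]
      exact hπ.2 y hy
    have hGm : ∀ π ∈ G, m p - #S ≤ #{x ∈ P \ S | π x ∈ A p} := by
      intro π hπ
      have hsplit : #{x ∈ P | π x ∈ A p} ≤ #{x ∈ P \ S | π x ∈ A p} + #S :=
        (card_le_card fun x => by grind).trans (card_union_le _ S)
      rw [sub_le_iff_le_add]
      exact (hm π (mem_filter.1 hπ).1 p (mem_insert_self p S)).trans (mod_cast hsplit)
    have hinsert : {π ∈ C | ∀ x ∈ insert p S, π x ∉ A x} = {π ∈ G | π p ∉ A p} := by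
      simp [hG, filter_filter, and_comm]
    rw [hinsert]
    refine (card_filter_notMem_le_of_swap_mem hGswap hGm).trans ?_
    grw [ih (fun π hπ x hx => hm π hπ x (mem_insert_of_mem hx)) hSP]
    rw [mul_assoc, ← Real.exp_add, ← neg_add, ← add_div, sum_insert hpS,
      card_insert_of_notMem hpS]
    gcongr
    push_cast
    linarith

end Swap

section Tuple

variable {ι : Type*} [Fintype ι] {α : ι → Type*} [∀ i, Fintype (α i)]

theorem sum_sum_update [DecidableEq ι] {M : Type*} [AddCommMonoid M]
    (k : ι) (h : (∀ i, α i) → M) :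
    ∑ x, ∑ a, h (Function.update x k a) = Fintype.card (α k) • ∑ x, h x := by
  -- `(x, a) ↦ (update x k a, x k)` is an involution.
  have hinv : ∑ x : (∀ i, α i) × α k, h (Function.update x.1 k x.2) =
      ∑ x : (∀ i, α i) × α k, h x.1 := by
    refine sum_nbij' (fun x => (Function.update x.1 k x.2, x.1 k))
      (fun x => (Function.update x.1 k x.2, x.1 k)) ?_ ?_ ?_ ?_ ?_ <;> simp
  rw [← Fintype.sum_prod_type' fun x a => h (Function.update x k a), hinv, Fintype.sum_prod_type]
  simp [smul_sum]

theorem sum_prod_le_card_of_sum_update_le [LinearOrder ι] [∀ i, Nonempty (α i)]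
    {f : ι → (∀ i, α i) → ℝ} (hf : ∀ i x, 0 ≤ f i x)
    (hdep : ∀ i k, i < k → ∀ x a, f i (Function.update x k a) = f i x)
    (hsum : ∀ i x, ∑ a, f i (Function.update x i a) ≤ Fintype.card (α i)) :
    ∑ x, ∏ i, f i x ≤ Fintype.card (∀ i, α i) := by
  suffices ∀ s : Finset ι, ∑ x, ∏ i ∈ s, f i x ≤ Fintype.card (∀ i, α i) from this univ
  intro s
  induction s using Finset.induction_on_max with
  | empty => simp
  | insert k s hk ih =>
    refine le_trans ?_ ih
    have hcard : (0 : ℝ) < Fintype.card (α k) := mod_cast Fintype.card_pos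
    refine le_of_mul_le_mul_left ?_ hcard
    rw [← nsmul_eq_mul, ← sum_sum_update, mul_sum]
    refine sum_le_sum fun x _ => ?_
    have hprod : ∀ a, ∏ i ∈ insert k s, f i (Function.update x k a) =
        f k (Function.update x k a) * ∏ i ∈ s, f i x := fun a => by
      rw [prod_insert fun h => (hk k h).false]
      congr 1
      exact prod_congr rfl fun i hi => hdep i k (hk i hi) x a
    simp_rw [hprod, ← sum_mul]
    exact mul_le_mul_of_nonneg_right (hsum k x) (prod_nonneg fun i _ => hf i x)

end Tuple

/-! ### Counting simultaneous events -/

theorem sum_card_filter_lt_eq_choose_two {ι : Type*} [LinearOrder ι] (s : Finset ι) :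
    ∑ i ∈ s, #{j ∈ s | j < i} = (#s).choose 2 := by
  induction s using Finset.induction_on_max with
  | empty => simp
  | insert k s hk ih =>
    have hks : k ∉ s := fun h => (hk k h).false
    have htop : {j ∈ insert k s | j < k} = s := by grind
    have hlow : ∀ i ∈ s, {j ∈ insert k s | j < i} = {j ∈ s | j < i} := by grind
    rw [sum_insert hks, htop, sum_congr rfl fun i hi => congrArg card (hlow i hi), ih,
      card_insert_of_notMem hks, Nat.choose_succ_succ, Nat.choose_one_right]

theorem two_mul_choose_two_add_self (n : ℕ) : 2 * n.choose 2 + n = n ^ 2 := by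
  rw [Nat.choose_two_right, Nat.mul_div_cancel' (Nat.even_mul_pred_self n).two_dvd, sq]
  cases n <;> simp [mul_add]

theorem sq_sum_card_le_card_mul {ι τ : Type*} [Fintype ι] [LinearOrder ι] [DecidableEq τ]
    {T : ι → Finset τ} {I : Finset τ} (hT : ∀ i, T i ⊆ I) :
    (∑ i, #(T i)) ^ 2 ≤
      #I * (2 * ∑ i, ∑ t ∈ T i, #{j | t ∈ T j ∧ j < i} + ∑ i, #(T i)) := by
  have hswap : ∀ φ : ι → τ → ℕ, ∑ i, ∑ t ∈ T i, φ i t = ∑ t ∈ I, ∑ i with t ∈ T i, φ i t :=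
    fun φ => sum_comm' fun i t => by simpa using fun h => hT i h
  have hcard : ∑ i, #(T i) = ∑ t ∈ I, #{i | t ∈ T i} := by
    simpa using hswap fun _ _ => 1
  have hpairs : ∀ t, 2 * ∑ i with t ∈ T i, #{j | t ∈ T j ∧ j < i} + #{i | t ∈ T i} =
      #{i | t ∈ T i} ^ 2 := fun t => by
    have h := sum_card_filter_lt_eq_choose_two ({i | t ∈ T i} : Finset ι)
    simp_rw [filter_filter] at h
    rw [h, two_mul_choose_two_add_self]
  rw [hswap, hcard, mul_sum, ← sum_add_distrib, sum_congr rfl fun t _ => hpairs t]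
  exact sq_sum_le_card_mul_sum_sq

theorem choose_two_card_le_sum_of_injective {ι : Type*} [Fintype ι] {f : ι → ℕ}
    (hf : Function.Injective f) : (Fintype.card ι).choose 2 ≤ ∑ i, f i := by
  classical
  have hinj : Function.Injective fun i => (f i : ℤ) := Nat.cast_injective.comp hf
  have h := sum_range_le_sum (s := univ.image fun i => (f i : ℤ)) (c := 0) (by simp)
  rw [card_image_of_injective _ hinj, sum_image hinj.injOn, card_univ] at h
  rw [Nat.choose_two_right, ← sum_range_id, ← Nat.cast_le (α := ℤ)]
  simpa using h

/-! ### One packet -/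

section Packet

variable {n : ℕ}

/-- The time step in which a packet with parking time `a` crosses its `p`-th critical edge
(counted from `0`), where `c j` is its waiting time in front of its `j`-th critical edge. -/
def critTime (a : ℕ) (c : Fin n → ℕ) (p : Fin n) : ℕ :=
  a + (2 * p + 3) + ∑ j ∈ Iic p, c j

theorem critTime_add_two_le (a : ℕ) (c : Fin n → ℕ) {p p' : Fin n} (h : p < p') :
    critTime a c p + 2 ≤ critTime a c p' := by
  have hsum : ∑ j ∈ Iic p, c j ≤ ∑ j ∈ Iic p', c j :=
    sum_le_sum_of_subset (Iic_subset_Iic.2 h.le)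
  have := Fin.lt_def.1 h
  unfold critTime
  omega

theorem critTime_injective (a : ℕ) (c : Fin n → ℕ) : Function.Injective (critTime a c) :=
  StrictMono.injective fun _ _ h => (Nat.le_succ _).trans (critTime_add_two_le a c h)

theorem critTime_le (a : ℕ) (c : Fin n → ℕ) (p : Fin n) :
    critTime a c p ≤ a + (2 * p + 3) + ∑ j, c j :=
  Nat.add_le_add_left (sum_le_sum_of_subset (subset_univ _)) _

/-- The times at which a packet crosses a critical edge without waiting in front of it. -/
def freeTimes (a : ℕ) (c : Fin n → ℕ) : Finset ℕ :=
  image (critTime a c) {p | c p = 0}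

theorem two_mul_card_freeTimes_inter_Ico_le (a : ℕ) (c : Fin n → ℕ) (l r : ℕ) :
    2 * #(freeTimes a c ∩ Ico l r) ≤ r - l + 1 := by
  have hcard : #(freeTimes a c ∩ Ico l r) ≤ #(range ((r - l + 1) / 2)) := by
    refine card_le_card_of_injOn (fun t => (t - l) / 2) (fun t ht => ?_) fun t ht t' ht' h => ?_
    · simp only [coe_inter, coe_Ico, Set.mem_inter_iff, Set.mem_Ico] at ht
      simp only [coe_range, Set.mem_Iio]
      omega
    · simp only [freeTimes, coe_inter, coe_image, coe_Ico, Set.mem_inter_iff, Set.mem_image,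
        Set.mem_Ico] at ht ht' h
      obtain ⟨⟨p, -, rfl⟩, hl, -⟩ := ht
      obtain ⟨⟨p', -, rfl⟩, hl', -⟩ := ht'
      rcases lt_trichotomy p p' with hlt | rfl | hlt
      · have := critTime_add_two_le a c hlt
        omega
      · rfl
      · have := critTime_add_two_le a c hlt
        omega
  rw [card_range] at hcard
  omega

theorem card_filter_ne_zero_le_sum {ι : Type*} [Fintype ι] (w : ι → ℕ) :
    #{e | w e ≠ 0} ≤ ∑ e, w e := by
  rw [card_filter]
  gcongr with e
  split_ifs <;> omega

theorem le_two_mul_card_freeTimes_inter_Ico {a d : ℕ} {c : Fin n → ℕ}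
    (h : a + ∑ p, c p + 3 ≤ n + d) :
    n ≤ 2 * #(freeTimes a c ∩ Ico n (2 * n)) + 3 * ∑ p, c p + d + 1 := by
  -- The positions whose crossing time is in `[n, 2n)` however the waiting is distributed.
  set D : Finset (Fin n) := {p | n ≤ a + (2 * p + 3) ∧ a + (2 * p + 3) + ∑ j, c j < 2 * n} with hD
  have hD_ge : #(Ico ((n - (a + 2)) / 2) ((2 * n - (a + 2 + ∑ p, c p)) / 2)) ≤ #D := by
    refine card_le_card_of_surjOn (fun p => (p : ℕ)) fun x hx => ?_
    simp only [coe_Ico, Set.mem_Ico] at hx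
    refine ⟨⟨x, by omega⟩, ?_, rfl⟩
    simp only [hD, coe_filter, mem_univ, true_and, Set.mem_ofPred_eq]
    omega
  have hD_le : #D ≤ #(freeTimes a c ∩ Ico n (2 * n)) + #{p | c p ≠ 0} := by
    rw [← card_image_of_injective D (critTime_injective a c),
      ← card_image_of_injective {p | c p ≠ 0} (critTime_injective a c)]
    refine (card_le_card fun t ht => ?_).trans (card_union_le _ _)
    obtain ⟨p, hp, rfl⟩ := mem_image.1 ht
    have hle := critTime_le a c p
    have hge : a + (2 * p + 3) ≤ critTime a c p := Nat.le_add_right _ _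
    simp only [hD, mem_filter, mem_univ, true_and] at hp
    by_cases hc : c p = 0
    · refine mem_union_left _ (mem_inter.2 ⟨mem_image_of_mem _ (by simpa), ?_⟩)
      rw [mem_Ico]
      omega
    · exact mem_union_right _ (mem_image_of_mem _ (by simpa))
  have := card_filter_ne_zero_le_sum c
  rw [Nat.card_Ico] at hD_ge
  omega

/-- The arrangements of the critical edges such that a packet with parking time `a` and waiting
time `w e` in front of the critical edge `e` crosses no edge of `X t` at a free time `t`. -/
def avoiding (a : ℕ) (w : Fin n → ℕ) (X : ℕ → Finset (Fin n)) : Finset (Equiv.Perm (Fin n)) :=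
  {π | ∀ p, w (π p) = 0 → π p ∉ X (critTime a (w ∘ π) p)}

/-- The exponent that `card_filter_forall_notMem_le` provides for avoiding the sets `X t` at the
free times `t ∈ I`, once the waiting times `c = w ∘ π` along the path are known. -/
noncomputable def gain (a : ℕ) (w : Fin n → ℕ) (X : ℕ → Finset (Fin n)) (I : Finset ℕ)
    (c : Fin n → ℕ) : ℝ :=
  ∑ t ∈ freeTimes a c ∩ I, (#{e ∈ X t | w e = 0} : ℝ) - (#(freeTimes a c ∩ I) : ℝ) ^ 2 / 2

theorem comp_mul_swap_eq_comp {α β : Type*} [DecidableEq α] {w : α → β} {π : Equiv.Perm α}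
    {p p' : α} (h : w (π p) = w (π p')) : w ∘ (π * Equiv.swap p p') = w ∘ π := by
  ext x
  rw [Function.comp_apply, Equiv.Perm.mul_apply, Equiv.swap_apply_def]
  split_ifs with hx hx'
  · rw [← h, ← hx, Function.comp_apply]
  · rw [h, ← hx', Function.comp_apply]
  · rfl

/-- Given the waiting times along its path, a packet has a fixed timetable, and its free critical
edges are still arranged uniformly at random. -/
theorem card_filter_avoiding_le (a : ℕ) (w : Fin n → ℕ) (X : ℕ → Finset (Fin n)) (I : Finset ℕ)
    (c : Fin n → ℕ) :
    (#((avoiding a w X).filter fun π : Equiv.Perm (Fin n) => w ∘ π = c) : ℝ) ≤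
      #{π : Equiv.Perm (Fin n) | w ∘ π = c} * Real.exp (-(gain a w X I c / n)) := by
  set C : Finset (Equiv.Perm (Fin n)) := {π | w ∘ π = c}
  have hw : ∀ π ∈ C, ∀ p, w (π p) = c p := fun π hπ => congrFun (mem_filter.1 hπ).2
  set P : Finset (Fin n) := {p | c p = 0} with hP
  set S : Finset (Fin n) := {p ∈ P | critTime a c p ∈ I} with hS
  have hST : freeTimes a c ∩ I = image (critTime a c) S := by
    ext t
    simp only [freeTimes, hS, hP, mem_inter, mem_image, mem_filter]
    grind
  have hswap : ∀ π ∈ C, ∀ p ∈ P, ∀ p' ∈ P, π * Equiv.swap p p' ∈ C := by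
    intro π hπ p hp p' hp'
    have heq : w (π p) = w (π p') := by
      rw [hw π hπ, hw π hπ, (mem_filter.1 hp).2, (mem_filter.1 hp').2]
    exact mem_filter.2 ⟨mem_univ _, (comp_mul_swap_eq_comp heq).trans (mem_filter.1 hπ).2⟩
  have hm : ∀ π ∈ C, ∀ p ∈ S, (#{e ∈ X (critTime a c p) | w e = 0} : ℝ) ≤
      #{x ∈ P | π x ∈ X (critTime a c p)} := by
    intro π hπ p _
    refine Nat.cast_le.2 (card_le_card_of_injOn π.symm (fun e he => ?_) π.symm.injective.injOn)
    have := mem_filter.1 he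
    simp [hP, ← hw π hπ, this.1, this.2]
  have key := card_filter_forall_notMem_le hswap hm (filter_subset _ P)
  rw [gain, hST, sum_image (critTime_injective a c).injOn,
    card_image_of_injective _ (critTime_injective a c)]
  rw [Fintype.card_fin] at key
  refine le_trans (Nat.cast_le.2 (card_le_card fun π hπ => ?_)) key
  obtain ⟨hav, hcomp⟩ := mem_filter.1 hπ
  simp only [mem_filter]
  refine ⟨mem_filter.2 ⟨mem_univ _, hcomp⟩, fun p hp => ?_⟩
  have hfree : w (π p) = 0 := by
    have := (mem_filter.1 (mem_filter.1 hp).1).2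
    rwa [← hcomp] at this
  exact hcomp ▸ (mem_filter.1 hav).2 p hfree

theorem sum_avoiding_exp_gain_le (a : ℕ) (w : Fin n → ℕ) (X : ℕ → Finset (Fin n))
    (I : Finset ℕ) :
    ∑ π ∈ avoiding a w X, Real.exp (gain a w X I (w ∘ π) / n) ≤
      Fintype.card (Equiv.Perm (Fin n)) := by
  set K : Finset (Fin n → ℕ) := univ.image fun π : Equiv.Perm (Fin n) => w ∘ π
  have hK : ∀ π : Equiv.Perm (Fin n), w ∘ π ∈ K := fun π => mem_image_of_mem _ (mem_univ π)
  rw [← card_univ, card_eq_sum_card_fiberwise (fun π _ => hK π),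
    ← sum_fiberwise_of_maps_to (fun π _ => hK π), Nat.cast_sum]
  refine sum_le_sum fun c _ => ?_
  set E := (avoiding a w X).filter fun π : Equiv.Perm (Fin n) => w ∘ π = c
  calc ∑ π ∈ E, Real.exp (gain a w X I (w ∘ π) / n) = #E * Real.exp (gain a w X I c / n) := by
        rw [sum_congr rfl fun π hπ => by rw [(mem_filter.1 hπ).2], sum_const, nsmul_eq_mul]
    _ ≤ #{π : Equiv.Perm (Fin n) | w ∘ π = c} * Real.exp (-(gain a w X I c / n)) *
          Real.exp (gain a w X I c / n) := by
        gcongr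
        exact card_filter_avoiding_le a w X I c
    _ = #{π : Equiv.Perm (Fin n) | w ∘ π = c} := by
        rw [mul_assoc, ← Real.exp_add, neg_add_cancel, Real.exp_zero, mul_one]

/-- The average of `gain` over the two halves of the time interval `[n, 2n)`. On the whole interval
the quadratic loss in `gain` would be too large. -/
noncomputable def avgGain (a : ℕ) (w : Fin n → ℕ) (X : ℕ → Finset (Fin n)) (c : Fin n → ℕ) : ℝ :=
  (gain a w X (Ico n (n + n / 2)) c + gain a w X (Ico (n + n / 2) (2 * n)) c) / 2

/-- The weight of an arrangement in the exponential moment argument: `exp (avgGain / n)` if it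
avoids the sets `X t`, and `0` otherwise. -/
noncomputable def score (a : ℕ) (w : Fin n → ℕ) (X : ℕ → Finset (Fin n))
    (π : Equiv.Perm (Fin n)) : ℝ :=
  if π ∈ avoiding a w X then Real.exp (avgGain a w X (w ∘ π) / n) else 0

theorem score_nonneg (a : ℕ) (w : Fin n → ℕ) (X : ℕ → Finset (Fin n)) (π : Equiv.Perm (Fin n)) :
    0 ≤ score a w X π := by
  unfold score
  positivity

theorem exp_half_add_le (x y : ℝ) : Real.exp ((x + y) / 2) ≤ (Real.exp x + Real.exp y) / 2 := by
  have h := convexOn_exp.2 (Set.mem_univ x) (Set.mem_univ y) (by norm_num : (0 : ℝ) ≤ 1 / 2)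
    (by norm_num : (0 : ℝ) ≤ 1 / 2) (by norm_num)
  simp only [smul_eq_mul] at h
  calc Real.exp ((x + y) / 2) = Real.exp (1 / 2 * x + 1 / 2 * y) := by ring_nf
    _ ≤ _ := by linarith

theorem sum_score_le (a : ℕ) (w : Fin n → ℕ) (X : ℕ → Finset (Fin n)) :
    ∑ π, score a w X π ≤ Fintype.card (Equiv.Perm (Fin n)) := by
  set I := Ico n (n + n / 2)
  set J := Ico (n + n / 2) (2 * n)
  calc ∑ π, score a w X π = ∑ π ∈ avoiding a w X, Real.exp (avgGain a w X (w ∘ π) / n) := by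
        simp [score, sum_ite_mem]
    _ ≤ ∑ π ∈ avoiding a w X, (Real.exp (gain a w X I (w ∘ π) / n) +
          Real.exp (gain a w X J (w ∘ π) / n)) / 2 := by
        refine sum_le_sum fun π _ => ?_
        rw [avgGain, div_right_comm, add_div]
        exact exp_half_add_le _ _
    _ ≤ Fintype.card (Equiv.Perm (Fin n)) := by
        rw [← sum_div, sum_add_distrib]
        linarith [sum_avoiding_exp_gain_le a w X I, sum_avoiding_exp_gain_le a w X J]

theorem le_gain_Ico (a : ℕ) (w : Fin n → ℕ) (X : ℕ → Finset (Fin n)) (c : Fin n → ℕ) (l r : ℕ) :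
    ∑ t ∈ freeTimes a c ∩ Ico l r, (#(X t) : ℝ) -
      #(freeTimes a c ∩ Ico l r) * (∑ e, w e + ((r - l : ℕ) + 1) / 4) ≤
    gain a w X (Ico l r) c := by
  set F := freeTimes a c ∩ Ico l r with hF
  have hX : ∀ t, (#(X t) : ℝ) - ∑ e, w e ≤ #{e ∈ X t | w e = 0} := fun t => by
    have hsplit := card_filter_add_card_filter_not (s := X t) (w · = 0)
    have hne : #{e ∈ X t | ¬ w e = 0} ≤ ∑ e, w e :=
      (card_le_card (filter_subset_filter _ (subset_univ _))).trans (card_filter_ne_zero_le_sum w)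
    rw [sub_le_iff_le_add]
    exact mod_cast hsplit.symm.le.trans (Nat.add_le_add_left hne _)
  have hsum : ∑ t ∈ F, (#(X t) : ℝ) - #F * ∑ e, w e ≤ ∑ t ∈ F, (#{e ∈ X t | w e = 0} : ℝ) := by
    rw [← nsmul_eq_mul, ← sum_const, ← sum_sub_distrib]
    exact sum_le_sum fun t _ => hX t
  have hcard : 2 * (#F : ℝ) ≤ (r - l : ℕ) + 1 :=
    mod_cast two_mul_card_freeTimes_inter_Ico_le a c l r
  have hsq : (#F : ℝ) ^ 2 / 2 ≤ #F * (((r - l : ℕ) + 1) / 4) := by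
    nlinarith [Nat.cast_nonneg (α := ℝ) #F]
  rw [gain, ← hF]
  linarith

theorem le_two_mul_avgGain (a : ℕ) (w : Fin n → ℕ) (X : ℕ → Finset (Fin n)) (c : Fin n → ℕ) :
    ∑ t ∈ freeTimes a c ∩ Ico n (2 * n), (#(X t) : ℝ) - (n + 1) / 2 * ∑ e, w e -
      (n + 3) / 8 * #(freeTimes a c ∩ Ico n (2 * n)) ≤ 2 * avgGain a w X c := by
  set m := n + n / 2
  set F := freeTimes a c ∩ Ico n (2 * n)
  set F₁ := freeTimes a c ∩ Ico n m
  set F₂ := freeTimes a c ∩ Ico m (2 * n)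
  have hunion : F = F₁ ∪ F₂ := by
    rw [← inter_union_distrib_left, Ico_union_Ico_eq_Ico (by omega) (by omega)]
  have hdisj : Disjoint F₁ F₂ :=
    (Ico_disjoint_Ico_consecutive n m (2 * n)).mono inter_subset_right inter_subset_right
  have hcard : (#F : ℝ) = #F₁ + #F₂ := by
    rw [hunion, card_union_of_disjoint hdisj, Nat.cast_add]
  have hF : 2 * (#F : ℝ) ≤ n + 1 := by
    have := two_mul_card_freeTimes_inter_Ico_le a c n (2 * n)
    exact mod_cast this.trans_eq (by omega)
  have hgain : ∀ l r, 2 * (r - l) ≤ n + 1 →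
      ∑ t ∈ freeTimes a c ∩ Ico l r, (#(X t) : ℝ) -
        #(freeTimes a c ∩ Ico l r) * (∑ e, w e + (n + 3) / 8) ≤ gain a w X (Ico l r) c := by
    intro l r hlr
    refine le_trans ?_ (le_gain_Ico a w X c l r)
    gcongr _ - _ * (_ + ?_)
    have : 2 * ((r - l : ℕ) : ℝ) ≤ n + 1 := mod_cast hlr
    linarith
  have hw : (#F : ℝ) * ∑ e, w e ≤ (n + 1) / 2 * ∑ e, w e := by
    gcongr
    linarith
  have hgain₁ := hgain n m (by omega)
  have hgain₂ := hgain m (2 * n) (by omega)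
  rw [hcard] at hw ⊢
  rw [hunion, sum_union hdisj, avgGain]
  push_cast at hw hgain₁ hgain₂ ⊢
  linarith

end Packet


/-! ### All packets -/

section Schedule

variable {n : ℕ} {W : Fin n → Fin (n + 2) → ℕ} {πs : Fin n → Equiv.Perm (Fin n)}

/-- The time packet `i` waits in front of the critical edge `e`, i.e. the entry `W_{i,j}` of the
routing matrix for `e = e_j`. -/
def critWait (W : Fin n → Fin (n + 2) → ℕ) (i e : Fin n) : ℕ :=
  W i e.castSucc.succ

theorem getElem?_flatten_ofFn_pair {β : Type*} {n : ℕ} (a b : Fin n → β) (p : Fin n) :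
    (List.ofFn fun i : Fin n => [a i, b i]).flatten[2 * (p : ℕ)]? = some (a p) := by
  induction n with
  | zero => exact p.elim0
  | succ n ih =>
    rw [List.ofFn_succ, List.flatten_cons]
    cases p using Fin.cases with
    | zero => simp
    | succ q =>
      rw [List.getElem?_append_right (by simp)]
      simpa [mul_add] using ih (fun i => a i.succ) (fun i => b i.succ) q

theorem pathOf_getElem?_crit (π : Equiv.Perm (Fin n)) (p : Fin n) :
    (pathOf π)[2 * ((p : ℕ) + 1)]? = some (Edg.crit (π p)) := by
  have h := getElem?_flatten_ofFn_pair (fun i => Edg.crit (π i))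
    (fun i => Edg.back (π i) (nxt π i) (nxt_ne π i)) p
  rw [pathOf, dif_pos p.pos, mul_add, mul_one, List.getElem?_cons_succ, List.getElem?_cons_succ,
    List.getElem?_append_left (List.getElem?_eq_some_iff.1 h).1]
  exact h

theorem crossTime_crit (W : Fin n → Fin (n + 2) → ℕ) (π : Equiv.Perm (Fin n)) (i p : Fin n) :
    crossTime W π i (2 * ((p : ℕ) + 1)) = critTime (W i 0) (critWait W i ∘ π) p := by
  have hlast : ¬ 2 * n + 2 ≤ 2 * ((p : ℕ) + 1) := by omega
  have hpos : ∀ j : Fin n, 2 * ((j : ℕ) + 1) ≤ 2 * ((p : ℕ) + 1) ↔ j ∈ Iic p := fun j => by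
    rw [mem_Iic, Fin.le_def]
    omega
  simp only [crossTime, critTime, if_neg hlast, hpos, sum_ite_mem, univ_inter]
  exact rfl

theorem critTime_ne_of_collisionFree (h : CollisionFree W πs) {i i' : Fin n} (hi : i ≠ i')
    {p p' : Fin n} (hp : πs i p = πs i' p') :
    critTime (W i 0) (critWait W i ∘ πs i) p ≠ critTime (W i' 0) (critWait W i' ∘ πs i') p' := by
  have hcrit := pathOf_getElem?_crit (πs i') p'
  rw [← hp] at hcrit
  simpa only [crossTime_crit] using h i i' hi _ _ _ (pathOf_getElem?_crit (πs i) p) hcrit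

/-- The critical edges crossed at time `t` by the packets before packet `i`. -/
def usedEdges (W : Fin n → Fin (n + 2) → ℕ) (πs : Fin n → Equiv.Perm (Fin n)) (i : Fin n)
    (t : ℕ) : Finset (Fin n) :=
  {e | ∃ i' < i, ∃ p, πs i' p = e ∧ critTime (W i' 0) (critWait W i' ∘ πs i') p = t}

theorem usedEdges_update (W : Fin n → Fin (n + 2) → ℕ) (πs : Fin n → Equiv.Perm (Fin n))
    {i k : Fin n} (h : i ≤ k) (π : Equiv.Perm (Fin n)) :
    usedEdges W (Function.update πs k π) i = usedEdges W πs i := by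
  ext t e
  simp only [usedEdges, mem_filter, mem_univ, true_and]
  refine exists_congr fun i' => and_congr_right fun hi' => ?_
  rw [Function.update_of_ne (hi'.trans_le h).ne]

theorem mem_avoiding_usedEdges_of_collisionFree (h : CollisionFree W πs) (i : Fin n) :
    πs i ∈ avoiding (W i 0) (critWait W i) (usedEdges W πs i) := by
  simp only [avoiding, usedEdges, mem_filter, mem_univ, true_and]
  rintro p - ⟨i', hlt, p', hedge, htime⟩
  exact critTime_ne_of_collisionFree h hlt.ne hedge htime

theorem sum_prod_score_le (W : Fin n → Fin (n + 2) → ℕ) :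
    ∑ πs : Fin n → Equiv.Perm (Fin n),
        ∏ i, score (W i 0) (critWait W i) (usedEdges W πs i) (πs i) ≤
      Fintype.card (Fin n → Equiv.Perm (Fin n)) := by
  refine sum_prod_le_card_of_sum_update_le
    (f := fun i πs => score (W i 0) (critWait W i) (usedEdges W πs i) (πs i))
    (fun i πs => score_nonneg _ _ _ _) (fun i k hik πs π => ?_) fun i πs => ?_
  · rw [usedEdges_update W πs hik.le, Function.update_of_ne hik.ne]
  · simp only [usedEdges_update W πs le_rfl, Function.update_self]
    exact sum_score_le _ _ _

/-- The times in `[n, 2n)` at which packet `i` crosses a critical edge without waiting in front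
of it. -/
def midFreeTimes (W : Fin n → Fin (n + 2) → ℕ) (πs : Fin n → Equiv.Perm (Fin n)) (i : Fin n) :
    Finset ℕ :=
  freeTimes (W i 0) (critWait W i ∘ πs i) ∩ Ico n (2 * n)

theorem card_filter_mem_midFreeTimes_le_card_usedEdges (h : CollisionFree W πs) (i : Fin n)
    (t : ℕ) : #{j | t ∈ midFreeTimes W πs j ∧ j < i} ≤ #(usedEdges W πs i t) := by
  refine card_le_card_of_forall_subsingleton
    (fun j e => ∃ p, πs j p = e ∧ critTime (W j 0) (critWait W j ∘ πs j) p = t) ?_ ?_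
  · intro j hj
    simp only [midFreeTimes, freeTimes, mem_filter, mem_univ, true_and, mem_inter,
      mem_image] at hj
    obtain ⟨⟨⟨p, -, hp⟩, -⟩, hji⟩ := hj
    exact ⟨πs j p, by simpa [usedEdges] using ⟨j, hji, p, rfl, hp⟩, p, rfl, hp⟩
  · rintro e - j ⟨-, p, hp, ht⟩ j' ⟨-, p', hp', ht'⟩
    by_contra hne
    exact critTime_ne_of_collisionFree h hne (hp.trans hp'.symm) (ht.trans ht'.symm)

theorem sq_sum_card_midFreeTimes_le (h : CollisionFree W πs) :
    (∑ i, #(midFreeTimes W πs i)) ^ 2 ≤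
      n * (2 * ∑ i, ∑ t ∈ midFreeTimes W πs i, #(usedEdges W πs i t) +
        ∑ i, #(midFreeTimes W πs i)) := by
  refine (sq_sum_card_le_card_mul (T := midFreeTimes W πs) (I := Ico n (2 * n))
    fun i => inter_subset_right).trans ?_
  rw [Nat.card_Ico, two_mul n, Nat.add_sub_cancel]
  gcongr n * (2 * ∑ i, ∑ t ∈ _, ?_ + _) with i _ t
  exact card_filter_mem_midFreeTimes_le_card_usedEdges h i t

end Schedule

/-! ### Candidate matrices -/

section Candidate

variable {n d : ℕ} {W : Fin n → Fin (n + 2) → ℕ} {πs : Fin n → Equiv.Perm (Fin n)}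

theorem le_arrivalTime (W : Fin n → Fin (n + 2) → ℕ) (i : Fin n) :
    W i 0 + (2 * n + 3) + ∑ e, critWait W i e ≤ arrivalTime W i := by
  have hcols : ∑ j with j ≠ 0, W i j = ∑ e, critWait W i e + W i (Fin.last n).succ := by
    rw [sum_filter, Fin.sum_univ_succ, Fin.sum_univ_castSucc]
    simp [critWait]
  rw [arrivalTime, hcols]
  omega

theorem arrivalTime_le_of_isCandidate {ε : ℝ} (hε : ε ≤ 1 / 20) (hW : IsCandidate ε n W)
    (i : Fin n) : arrivalTime W i ≤ 3 * n + n / 20 := by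
  have hreal : 20 * (arrivalTime W i : ℝ) ≤ 61 * n := by
    have : (3 + ε) * n ≤ (3 + 1 / 20) * n := by gcongr
    linarith [hW.2.2 i]
  have : 20 * arrivalTime W i ≤ 61 * n := mod_cast hreal
  omega

/-- The parking times are `n` distinct natural numbers, and so are the distances of the arrival
times to the deadline `3 n + d`; hence both sum to at least `n (n - 1) / 2`. -/
theorem sum_critWait_add_le (hpark : Function.Injective fun i => W i 0)
    (harr : Function.Injective (arrivalTime W)) (hd : ∀ i, arrivalTime W i ≤ 3 * n + d) :
    ∑ i, ∑ e, critWait W i e + 2 * n ≤ n * d := by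
  have hslack : Function.Injective fun i => 3 * n + d - arrivalTime W i := fun i j hij => by
    have hij' : 3 * n + d - arrivalTime W i = 3 * n + d - arrivalTime W j := hij
    have := hd i
    have := hd j
    exact harr (by omega)
  have hpark_sum := choose_two_card_le_sum_of_injective hpark
  have hslack_sum := choose_two_card_le_sum_of_injective hslack
  have htotal : ∑ i, (W i 0 + (2 * n + 3) + ∑ e, critWait W i e +
      (3 * n + d - arrivalTime W i)) ≤ n * (3 * n + d) := by
    refine (sum_le_card_nsmul univ _ (3 * n + d) fun i _ => ?_).trans (by simp)
    have := le_arrivalTime W i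
    have := hd i
    omega
  simp only [sum_add_distrib, sum_const, card_univ, Fintype.card_fin, smul_eq_mul] at htotal
  have hchoose := two_mul_choose_two_add_self n
  rw [Fintype.card_fin] at hpark_sum hslack_sum
  linarith

theorem le_two_mul_card_midFreeTimes {i : Fin n} (hd : arrivalTime W i ≤ 3 * n + d) :
    n ≤ 2 * #(midFreeTimes W πs i) + 3 * ∑ e, critWait W i e + d + 1 := by
  have hsum : ∑ p, (critWait W i ∘ πs i) p = ∑ e, critWait W i e :=
    Equiv.sum_comp (πs i) (critWait W i)
  rw [← hsum]
  apply le_two_mul_card_freeTimes_inter_Ico (a := W i 0)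
  have := le_arrivalTime W i
  omega

theorem cube_le_of_sq_le {n V σ U x : ℝ} (hn : 0 < n) (hx : 20 * x ≤ n ^ 2)
    (hσ : σ + 2 * n ≤ x) (hV : n ^ 2 ≤ 2 * V + 3 * σ + x + n) (hU : V ^ 2 ≤ n * (2 * U + V)) :
    n ^ 3 / 200 ≤ U - (n + 1) / 2 * σ - (n + 3) / 8 * V := by
  have hV' : 2 / 5 * n ^ 2 + 5 / 2 * n ≤ V := by linarith
  have hU' : (n / 5 + 3 / 4) * V ≤ U := by
    have : V * (2 / 5 * n ^ 2 + 5 / 2 * n) ≤ V ^ 2 := by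
      rw [sq V]
      exact mul_le_mul_of_nonneg_left hV' (le_trans (by positivity) hV')
    refine le_of_mul_le_mul_left ?_ hn
    linarith
  have hσ' : (n + 1) / 2 * σ ≤ (n + 1) / 2 * (n ^ 2 / 20 - 2 * n) := by
    gcongr
    linarith
  have hnet : (3 / 40 * n + 3 / 8) * (2 / 5 * n ^ 2 + 5 / 2 * n) ≤ (3 / 40 * n + 3 / 8) * V := by
    gcongr
  nlinarith [sq_nonneg n]

theorem le_sum_avgGain {ε : ℝ} (hε : ε ≤ 1 / 20) (hW : IsCandidate ε n W)
    (h : CollisionFree W πs) :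
    (n : ℝ) ^ 3 / 400 ≤ ∑ i,
      avgGain (W i 0) (critWait W i) (usedEdges W πs i) (critWait W i ∘ πs i) := by
  rcases n.eq_zero_or_pos with rfl | hn
  · simp
  have hd := arrivalTime_le_of_isCandidate hε hW
  have hσ := sum_critWait_add_le hW.1 hW.2.1 hd
  have hU := sq_sum_card_midFreeTimes_le h
  have hV := sum_le_sum fun i (_ : i ∈ univ) => le_two_mul_card_midFreeTimes (πs := πs) (hd i)
  have hgain := sum_le_sum fun i (_ : i ∈ univ) =>
    le_two_mul_avgGain (W i 0) (critWait W i) (usedEdges W πs i) (critWait W i ∘ πs i)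
  have hx : 20 * (n * (n / 20)) ≤ n ^ 2 := by
    rw [mul_left_comm, sq]
    exact Nat.mul_le_mul_left n (Nat.mul_div_le n 20)
  simp only [sum_add_distrib, sum_sub_distrib, ← mul_sum, sum_const, card_univ, Fintype.card_fin,
    smul_eq_mul, mul_one] at hV hgain
  rw [← sq] at hV
  have := cube_le_of_sq_le (n := n) (V := ∑ i, #(midFreeTimes W πs i))
    (σ := (∑ i, ∑ e, critWait W i e : ℕ))
    (U := (∑ i, ∑ t ∈ midFreeTimes W πs i, #(usedEdges W πs i t) : ℕ)) (x := (n * (n / 20) : ℕ))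
    (mod_cast hn) (mod_cast hx) (mod_cast hσ) (mod_cast hV) (mod_cast hU)
  simp only [midFreeTimes] at this
  push_cast at this hgain
  linarith

end Candidate

/-! ### The collision probability -/

theorem exp_le_prod_score {n : ℕ} {W : Fin n → Fin (n + 2) → ℕ}
    {πs : Fin n → Equiv.Perm (Fin n)} {ε : ℝ} (hε : ε ≤ 1 / 20) (hW : IsCandidate ε n W)
    (h : CollisionFree W πs) :
    Real.exp ((n : ℝ) ^ 2 / 400) ≤
      ∏ i, score (W i 0) (critWait W i) (usedEdges W πs i) (πs i) := by
  simp only [score, if_pos (mem_avoiding_usedEdges_of_collisionFree h _)]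
  rw [← Real.exp_sum, ← sum_div, Real.exp_le_exp]
  rcases n.eq_zero_or_pos with rfl | hn
  · simp
  rw [le_div_iff₀ (mod_cast hn)]
  exact (by ring : (n : ℝ) ^ 2 / 400 * n = n ^ 3 / 400).trans_le (le_sum_avgGain hε hW h)

theorem fixed_matrix_collision_probability_general (ε : ℝ) (hε : ε ≤ 1 / 20)
    (n : ℕ) (W : Fin n → Fin (n + 2) → ℕ) (hW : IsCandidate ε n W) :
    (Nat.card {πs : Fin n → Equiv.Perm (Fin n) // CollisionFree W πs} : ℝ)
      ≤ Real.exp (-((n : ℝ) ^ 2 / 400)) * (Nat.card (Fin n → Equiv.Perm (Fin n)) : ℝ) := by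
  classical
  rw [Nat.card_eq_fintype_card, Nat.card_eq_fintype_card, Fintype.card_subtype, Real.exp_neg,
    ← div_eq_inv_mul, le_div_iff₀ (Real.exp_pos _), ← nsmul_eq_mul]
  set f : (Fin n → Equiv.Perm (Fin n)) → ℝ := fun πs =>
    ∏ i, score (W i 0) (critWait W i) (usedEdges W πs i) (πs i)
  calc #{πs | CollisionFree W πs} • Real.exp ((n : ℝ) ^ 2 / 400)
      ≤ ∑ πs with CollisionFree W πs, f πs :=
        card_nsmul_le_sum _ _ _ fun πs hπs => exp_le_prod_score hε hW (mem_filter.1 hπs).2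
    _ ≤ ∑ πs, f πs :=
        sum_le_univ_sum_of_nonneg fun πs => prod_nonneg fun i _ => score_nonneg _ _ _ _
    _ ≤ Fintype.card (Fin n → Equiv.Perm (Fin n)) := sum_prod_score_le W

theorem exp_neg_div_le_rpow {x : ℝ} (hx : 0 ≤ x) :
    Real.exp (-(x / 400)) ≤ ((15 : ℝ) / 16) ^ (x / 128) := by
  have hlog : -(1 / 15) ≤ Real.log (15 / 16) := by
    have := Real.one_sub_inv_le_log_of_pos (x := 15 / 16) (by norm_num)
    norm_num at this ⊢
    exact this
  rw [Real.rpow_def_of_pos (by norm_num), Real.exp_le_exp]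
  nlinarith

end

/-- Let `ε ≤ 1/20`, let `n > 0` be divisible by `16`, and let `W`
be a candidate routing matrix for parameters `ε`, `n`. For independent uniformly
random permutations `π₁,…,π_n` (a uniform tuple `πs`), the probability that the
schedule induced by `W` on `I(π₁,…,π_n)` is collision-free is at most
`(15/16)^{n²/128}`. -/
theorem fixed_matrix_collision_probability (ε : ℝ) (hε : ε ≤ 1 / 20)
    (n : ℕ) (hn : 0 < n) (h16 : 16 ∣ n)
    (W : Fin n → Fin (n + 2) → ℕ) (hW : IsCandidate ε n W) :
    (Nat.card {πs : Fin n → Equiv.Perm (Fin n) // CollisionFree W πs} : ℝ)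
      ≤ ((15 : ℝ) / 16) ^ ((n : ℝ) ^ 2 / 128) *
          (Nat.card (Fin n → Equiv.Perm (Fin n)) : ℝ) := by
  exact (fixed_matrix_collision_probability_general ε hε n W hW).trans
    (mul_le_mul_of_nonneg_right (exp_neg_div_le_rpow (sq_nonneg _)) (Nat.cast_nonneg _))
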